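/- Let (M,g) be a Riemannian 4-manifold with a parallel isometric paracomplex structure j, and define the neutral metric g'(X,Y) = g(jX, Y). Then g' is locally conformally flat if and only if g is Einstein. -/

import Mathlib

open Finset Matrix

/-- Partial derivative in the `i`-th coordinate direction on `ℝ⁴`. -/
noncomputable def pd (i : Fin 4) (f : (Fin 4 → ℝ) → ℝ) : (Fin 4 → ℝ) → ℝ :=
  fun x => deriv (fun t => f (Function.update x i t)) (x i)

/-- Christoffel symbols `Γ^k_{ij}` of a coordinate metric `g` on `ℝ⁴`. -/
noncomputable def christoffel (g : (Fin 4 → ℝ) → Matrix (Fin 4) (Fin 4) ℝ)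
    (k i j : Fin 4) : (Fin 4 → ℝ) → ℝ :=
  fun x => (1 / 2) * ∑ l, (g x)⁻¹ k l *
    (pd i (fun y => g y l j) x + pd j (fun y => g y l i) x - pd l (fun y => g y i j) x)

/-- Riemann curvature `R^l_{kij} = ∂ᵢΓ^l_{jk} − ∂ⱼΓ^l_{ik} + Γ^l_{im}Γ^m_{jk} − Γ^l_{jm}Γ^m_{ik}`. -/
noncomputable def riemannUp (g : (Fin 4 → ℝ) → Matrix (Fin 4) (Fin 4) ℝ)
    (l k i j : Fin 4) : (Fin 4 → ℝ) → ℝ :=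
  fun x => pd i (christoffel g l j k) x - pd j (christoffel g l i k) x
    + ∑ m, (christoffel g l i m x * christoffel g m j k x
      - christoffel g l j m x * christoffel g m i k x)

/-- The fully covariant Riemann tensor `R_{abcd} = g_{al} R^l_{bcd}`. -/
noncomputable def riemannLow (g : (Fin 4 → ℝ) → Matrix (Fin 4) (Fin 4) ℝ)
    (a b c d : Fin 4) : (Fin 4 → ℝ) → ℝ :=
  fun x => ∑ l, g x a l * riemannUp g l b c d x

/-- Ricci curvature `R_{kj} = R^a_{kaj}`. -/
noncomputable def ricciT (g : (Fin 4 → ℝ) → Matrix (Fin 4) (Fin 4) ℝ)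
    (k j : Fin 4) : (Fin 4 → ℝ) → ℝ :=
  fun x => ∑ a, riemannUp g a k a j x

/-- Scalar curvature `S = g^{kj} R_{kj}`. -/
noncomputable def scalarT (g : (Fin 4 → ℝ) → Matrix (Fin 4) (Fin 4) ℝ) :
    (Fin 4 → ℝ) → ℝ :=
  fun x => ∑ k, ∑ j, (g x)⁻¹ k j * ricciT g k j x

/-- The Weyl conformal curvature tensor in dimension 4:
`W_{abcd} = R_{abcd} − ½(g_{ac}R_{bd} − g_{ad}R_{bc} − g_{bc}R_{ad} + g_{bd}R_{ac})
 + (S/6)(g_{ac}g_{bd} − g_{ad}g_{bc})`. -/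
noncomputable def weylT (g : (Fin 4 → ℝ) → Matrix (Fin 4) (Fin 4) ℝ)
    (a b c d : Fin 4) : (Fin 4 → ℝ) → ℝ :=
  fun x => riemannLow g a b c d x
    - (1 / 2) * (g x a c * ricciT g b d x - g x a d * ricciT g b c x
      - g x b c * ricciT g a d x + g x b d * ricciT g a c x)
    + (scalarT g x / 6) * (g x a c * g x b d - g x a d * g x b c)

/-- Covariant derivative of an endomorphism field `j`. -/
noncomputable def covDerivEnd (g j : (Fin 4 → ℝ) → Matrix (Fin 4) (Fin 4) ℝ)
    (i k l : Fin 4) : (Fin 4 → ℝ) → ℝ :=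
  fun x => pd i (fun y => j y k l) x
    + ∑ m, christoffel g k i m x * j x m l
    - ∑ m, christoffel g m i l x * j x k m

open scoped ContDiff

section PartialDerivatives

variable {f f₁ f₂ : (Fin 4 → ℝ) → ℝ}

theorem pd_eq_fderiv (hf : Differentiable ℝ f) (i : Fin 4) :
    pd i f = fun x => fderiv ℝ f x (Pi.single i 1) := by
  funext x
  have h1 : HasDerivAt (Function.update x i) (Pi.single i (1 : ℝ)) (x i) :=
    hasDerivAt_update x i (x i)
  have h2 : HasFDerivAt f (fderiv ℝ f x) (Function.update x i (x i)) := by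
    rw [Function.update_eq_self]
    exact (hf x).hasFDerivAt
  exact (h2.comp_hasDerivAt (x i) h1).deriv

theorem ContDiff.pd (hf : ContDiff ℝ ∞ f) (i : Fin 4) : ContDiff ℝ ∞ (pd i f) := by
  rw [pd_eq_fderiv (hf.differentiable (by simp))]
  exact (hf.fderiv_right (m := ∞) (by simp)).clm_apply contDiff_const

theorem pd_add (h₁ : ContDiff ℝ ∞ f₁) (h₂ : ContDiff ℝ ∞ f₂) (i : Fin 4) (x : Fin 4 → ℝ) :
    pd i (fun y => f₁ y + f₂ y) x = pd i f₁ x + pd i f₂ x := by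
  have d₁ := h₁.differentiable (by simp)
  have d₂ := h₂.differentiable (by simp)
  rw [pd_eq_fderiv d₁, pd_eq_fderiv d₂, pd_eq_fderiv (d₁.fun_add d₂)]
  simp only [fderiv_fun_add (d₁ x) (d₂ x)]
  rfl

theorem pd_mul (h₁ : ContDiff ℝ ∞ f₁) (h₂ : ContDiff ℝ ∞ f₂) (i : Fin 4) (x : Fin 4 → ℝ) :
    pd i (fun y => f₁ y * f₂ y) x = pd i f₁ x * f₂ x + f₁ x * pd i f₂ x := by
  have d₁ := h₁.differentiable (by simp)
  have d₂ := h₂.differentiable (by simp)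
  rw [pd_eq_fderiv d₁, pd_eq_fderiv d₂, pd_eq_fderiv (d₁.fun_mul d₂)]
  simp [fderiv_fun_mul (d₁ x) (d₂ x)]
  ring

theorem pd_neg (i : Fin 4) (x : Fin 4 → ℝ) : pd i (fun y => -f y) x = -pd i f x := by
  simp [pd]

theorem pd_sum {ι : Type*} (s : Finset ι) {F : ι → (Fin 4 → ℝ) → ℝ}
    (h : ∀ m, ContDiff ℝ ∞ (F m)) (i : Fin 4) (x : Fin 4 → ℝ) :
    pd i (fun y => ∑ m ∈ s, F m y) x = ∑ m ∈ s, pd i (F m) x := by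
  have d : ∀ m, Differentiable ℝ (F m) := fun m => (h m).differentiable (by simp)
  rw [pd_eq_fderiv (Differentiable.fun_sum fun m _ => d m)]
  simp [fderiv_fun_sum fun m _ => d m x, pd_eq_fderiv (d _)]

theorem pd_comm (hf : ContDiff ℝ ∞ f) (i k : Fin 4) (x : Fin 4 → ℝ) :
    pd i (pd k f) x = pd k (pd i f) x := by
  have hd := hf.differentiable (by simp)
  have hd2 : Differentiable ℝ (fderiv ℝ f) :=
    (hf.fderiv_right (m := ∞) (by simp)).differentiable (by simp)
  have key : ∀ a b : Fin 4, pd a (pd b f) x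
      = fderiv ℝ (fderiv ℝ f) x (Pi.single a 1) (Pi.single b 1) := by
    intro a b
    rw [pd_eq_fderiv ((hf.pd b).differentiable (by simp)), pd_eq_fderiv hd]
    simp only
    rw [fderiv_clm_apply (hd2 x) (differentiableAt_const _)]
    simp
  rw [key, key]
  exact (hf.contDiffAt.isSymmSndFDerivAt (by
    rw [minSmoothness_of_isRCLikeNormedField]
    exact WithTop.coe_le_coe.2 le_top)) _ _

theorem eq_const_of_pd_eq_zero (hf : ContDiff ℝ ∞ f) (h : ∀ i x, pd i f x = 0)
    (x y : Fin 4 → ℝ) : f x = f y := by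
  have hd := hf.differentiable (by simp)
  refine is_const_of_fderiv_eq_zero hd (fun z => ?_) x y
  refine ContinuousLinearMap.coe_injective (LinearMap.pi_ext' fun i => LinearMap.ext_ring ?_)
  have := h i z
  rw [pd_eq_fderiv hd] at this
  simpa using this

end PartialDerivatives

section MatrixFields

/-- A matrix field on `ℝ⁴` all of whose entries are smooth. -/
def SmoothEntries (A : (Fin 4 → ℝ) → Matrix (Fin 4) (Fin 4) ℝ) : Prop :=
  ∀ a b, ContDiff ℝ ∞ fun x => A x a b

/-- Entrywise partial derivative of a matrix field. -/
noncomputable def matPd (i : Fin 4) (A : (Fin 4 → ℝ) → Matrix (Fin 4) (Fin 4) ℝ) :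
    (Fin 4 → ℝ) → Matrix (Fin 4) (Fin 4) ℝ :=
  fun x => Matrix.of fun a b => pd i (fun y => A y a b) x

variable {A B : (Fin 4 → ℝ) → Matrix (Fin 4) (Fin 4) ℝ}

theorem SmoothEntries.add (hA : SmoothEntries A) (hB : SmoothEntries B) :
    SmoothEntries fun x => A x + B x := fun a b => (hA a b).add (hB a b)

theorem SmoothEntries.neg (hA : SmoothEntries A) : SmoothEntries fun x => -A x :=
  fun a b => (hA a b).neg

theorem SmoothEntries.sub (hA : SmoothEntries A) (hB : SmoothEntries B) :
    SmoothEntries fun x => A x - B x := fun a b => (hA a b).sub (hB a b)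

theorem SmoothEntries.mul (hA : SmoothEntries A) (hB : SmoothEntries B) :
    SmoothEntries fun x => A x * B x := by
  intro a b
  simp only [Matrix.mul_apply]
  exact ContDiff.sum fun m _ => (hA a m).mul (hB m b)

theorem SmoothEntries.transpose (hA : SmoothEntries A) : SmoothEntries fun x => (A x)ᵀ :=
  fun a b => hA b a

theorem SmoothEntries.matPd (hA : SmoothEntries A) (i : Fin 4) : SmoothEntries (matPd i A) :=
  fun a b => (hA a b).pd i

theorem SmoothEntries.det (hA : SmoothEntries A) : ContDiff ℝ ∞ fun x => (A x).det := by
  simp only [Matrix.det_apply']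
  exact ContDiff.sum fun σ _ => contDiff_const.mul (contDiff_prod fun m _ => hA _ _)

theorem SmoothEntries.inv (hA : SmoothEntries A) (h : ∀ x, IsUnit (A x).det) :
    SmoothEntries fun x => (A x)⁻¹ := by
  intro a b
  simp only [Matrix.inv_def, Matrix.smul_apply, smul_eq_mul, Ring.inverse_eq_inv',
    Matrix.adjugate_apply]
  refine (hA.det.inv fun x => (h x).ne_zero).mul (SmoothEntries.det ?_)
  intro c d
  by_cases hc : c = b
  · subst hc
    simpa using contDiff_const
  · simpa [Matrix.updateRow_ne hc] using hA c d

theorem matPd_add (hA : SmoothEntries A) (hB : SmoothEntries B) (i : Fin 4) (x : Fin 4 → ℝ) :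
    matPd i (fun y => A y + B y) x = matPd i A x + matPd i B x := by
  ext a b
  exact pd_add (hA a b) (hB a b) i x

theorem matPd_neg (i : Fin 4) (x : Fin 4 → ℝ) : matPd i (fun y => -A y) x = -matPd i A x := by
  ext a b
  exact pd_neg (f := fun y => A y a b) i x

theorem matPd_sub (hA : SmoothEntries A) (hB : SmoothEntries B) (i : Fin 4) (x : Fin 4 → ℝ) :
    matPd i (fun y => A y - B y) x = matPd i A x - matPd i B x := by
  simp only [sub_eq_add_neg]
  rw [matPd_add hA hB.neg, matPd_neg]

theorem matPd_mul (hA : SmoothEntries A) (hB : SmoothEntries B) (i : Fin 4) (x : Fin 4 → ℝ) :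
    matPd i (fun y => A y * B y) x = matPd i A x * B x + A x * matPd i B x := by
  ext a b
  simp only [matPd, Matrix.of_apply, Matrix.add_apply, Matrix.mul_apply]
  rw [pd_sum _ fun m => (hA a m).mul (hB m b), ← Finset.sum_add_distrib]
  exact Finset.sum_congr rfl fun m _ => pd_mul (hA a m) (hB m b) i x

theorem matPd_transpose (i : Fin 4) (x : Fin 4 → ℝ) :
    matPd i (fun y => (A y)ᵀ) x = (matPd i A x)ᵀ := rfl

theorem matPd_comm (hA : SmoothEntries A) (i k : Fin 4) (x : Fin 4 → ℝ) :
    matPd i (matPd k A) x = matPd k (matPd i A) x := by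
  ext a b
  exact pd_comm (hA a b) i k x

end MatrixFields

section Connection

/-- The connection matrices `(Γᵢ)^l_k = Γ^l_{ik}` of a coordinate metric. -/
noncomputable def connMatrix (g : (Fin 4 → ℝ) → Matrix (Fin 4) (Fin 4) ℝ) (i : Fin 4) :
    (Fin 4 → ℝ) → Matrix (Fin 4) (Fin 4) ℝ :=
  fun x => Matrix.of fun l k => christoffel g l i k x

/-- The curvature matrices `(R_{cd})^l_k = R^l_{kcd}` of a coordinate metric. -/
noncomputable def curvMatrix (g : (Fin 4 → ℝ) → Matrix (Fin 4) (Fin 4) ℝ) (c d : Fin 4) :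
    (Fin 4 → ℝ) → Matrix (Fin 4) (Fin 4) ℝ :=
  fun x => Matrix.of fun l k => riemannUp g l k c d x

variable {g h j : (Fin 4 → ℝ) → Matrix (Fin 4) (Fin 4) ℝ}

theorem curvMatrix_eq (c d : Fin 4) (x : Fin 4 → ℝ) :
    curvMatrix g c d x = matPd c (connMatrix g d) x - matPd d (connMatrix g c) x
      + (connMatrix g c x * connMatrix g d x - connMatrix g d x * connMatrix g c x) := by
  ext l k
  simp [curvMatrix, riemannUp, matPd, connMatrix, Matrix.mul_apply, Finset.sum_sub_distrib]

theorem curvMatrix_swap (c d : Fin 4) (x : Fin 4 → ℝ) :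
    curvMatrix g d c x = -curvMatrix g c d x := by
  rw [curvMatrix_eq, curvMatrix_eq]
  abel

theorem christoffel_symm (hs : ∀ x, (g x)ᵀ = g x) (k i l : Fin 4) (x : Fin 4 → ℝ) :
    christoffel g k i l x = christoffel g k l i x := by
  have hs' : ∀ a b, (fun y => g y a b) = fun y => g y b a := fun a b =>
    funext fun y => congrFun (congrFun (hs y) b) a
  simp only [christoffel]
  congr 1
  refine Finset.sum_congr rfl fun m _ => ?_
  rw [hs' i l]
  ring

theorem curvMatrix_bianchi (hs : ∀ x, (g x)ᵀ = g x) (l b c d : Fin 4) (x : Fin 4 → ℝ) :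
    curvMatrix g c d x l b + curvMatrix g d b x l c + curvMatrix g b c x l d = 0 := by
  have hs' : ∀ a b c, christoffel g a b c = christoffel g a c b := fun a b c =>
    funext fun y => christoffel_symm hs a b c y
  simp only [curvMatrix, Matrix.of_apply, riemannUp, Finset.sum_sub_distrib]
  rw [hs' l d b, hs' l c b, hs' l d c]
  simp only [hs' _ d b, hs' _ c b, hs' _ d c]
  ring

theorem christoffel_smooth (hg : SmoothEntries g) (hu : ∀ x, IsUnit (g x).det)
    (k i l : Fin 4) : ContDiff ℝ ∞ (christoffel g k i l) := by
  unfold christoffel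
  refine contDiff_const.mul (ContDiff.sum fun m _ => (hg.inv hu k m).mul ?_)
  exact (((hg m l).pd i).add ((hg m i).pd l)).sub ((hg i l).pd m)

theorem connMatrix_smooth (hg : SmoothEntries g) (hu : ∀ x, IsUnit (g x).det) (i : Fin 4) :
    SmoothEntries (connMatrix g i) := fun l k => christoffel_smooth hg hu l i k

theorem curvMatrix_smooth (hg : SmoothEntries g) (hu : ∀ x, IsUnit (g x).det) (c d : Fin 4) :
    SmoothEntries (curvMatrix g c d) := by
  have hΓ := connMatrix_smooth hg hu
  rw [show curvMatrix g c d = _ from funext fun x => curvMatrix_eq c d x]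
  exact (((hΓ d).matPd c).sub ((hΓ c).matPd d)).add (((hΓ c).mul (hΓ d)).sub ((hΓ d).mul (hΓ c)))

theorem christoffel_eq_mulVec (k i l : Fin 4) (x : Fin 4 → ℝ) :
    christoffel g k i l x = ((g x)⁻¹ *ᵥ fun m => (1 / 2) *
      (pd i (fun y => g y m l) x + pd l (fun y => g y m i) x - pd m (fun y => g y i l) x)) k := by
  simp only [christoffel, Matrix.mulVec, dotProduct, Finset.mul_sum]
  exact Finset.sum_congr rfl fun m _ => by ring

theorem mul_connMatrix_apply (hu : ∀ x, IsUnit (g x).det) (a i b : Fin 4) (x : Fin 4 → ℝ) :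
    (g x * connMatrix g i x) a b = (1 / 2) * (pd i (fun y => g y a b) x
      + pd b (fun y => g y a i) x - pd a (fun y => g y i b) x) := by
  have : (g x * connMatrix g i x) a b = (g x *ᵥ fun m => christoffel g m i b x) a := by
    simp [Matrix.mul_apply, connMatrix, Matrix.mulVec, dotProduct]
  rw [this]
  simp only [christoffel_eq_mulVec]
  rw [show (fun m => ((g x)⁻¹ *ᵥ _) m) = ((g x)⁻¹ *ᵥ _) from rfl, Matrix.mulVec_mulVec,
    Matrix.mul_nonsing_inv _ (hu x), Matrix.one_mulVec]

/-- Metric compatibility of the Levi-Civita connection. -/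
theorem matPd_metric (hs : ∀ x, (g x)ᵀ = g x) (hu : ∀ x, IsUnit (g x).det) (i : Fin 4)
    (x : Fin 4 → ℝ) :
    matPd i g x = (connMatrix g i x)ᵀ * g x + g x * connMatrix g i x := by
  have hs' : ∀ a b, (fun y => g y a b) = fun y => g y b a := fun a b =>
    funext fun y => congrFun (congrFun (hs y) b) a
  ext a b
  have : (connMatrix g i x)ᵀ * g x = (g x * connMatrix g i x)ᵀ := by
    rw [Matrix.transpose_mul, hs]
  rw [this, Matrix.add_apply, Matrix.transpose_apply, mul_connMatrix_apply hu,
    mul_connMatrix_apply hu, hs' b a, hs' b i, hs' a i]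
  simp only [matPd, Matrix.of_apply]
  ring

/-- A symmetric nondegenerate tensor that is parallel for the Levi-Civita connection of `g`
has the same Christoffel symbols as `g`. -/
theorem christoffel_eq_of_parallel (hs : ∀ x, (g x)ᵀ = g x) (hhs : ∀ x, (h x)ᵀ = h x)
    (hhu : ∀ x, IsUnit (h x).det)
    (hpar : ∀ i x, matPd i h x = (connMatrix g i x)ᵀ * h x + h x * connMatrix g i x) :
    christoffel h = christoffel g := by
  funext k i l x
  have key : ∀ i a b, pd i (fun y => h y a b) x
      = ∑ m, h x b m * christoffel g m i a x + ∑ m, h x a m * christoffel g m i b x := by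
    intro i a b
    have := congrFun (congrFun (hpar i x) a) b
    have hsym : (connMatrix g i x)ᵀ * h x = (h x * connMatrix g i x)ᵀ := by
      rw [Matrix.transpose_mul, hhs]
    rw [hsym] at this
    simpa [matPd, Matrix.mul_apply, connMatrix, mul_comm] using this
  have hsum : (fun m => (1 / 2) * (pd i (fun y => h y m l) x + pd l (fun y => h y m i) x
      - pd m (fun y => h y i l) x)) = h x *ᵥ fun m => christoffel g m i l x := by
    funext m
    rw [key, key, key]
    simp only [christoffel_symm hs _ l i, christoffel_symm hs _ l m, christoffel_symm hs _ i m,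
      Matrix.mulVec, dotProduct]
    ring
  rw [christoffel_eq_mulVec, hsum, Matrix.mulVec_mulVec, Matrix.nonsing_inv_mul _ (hhu x),
    Matrix.one_mulVec]

theorem riemannUp_congr (hΓ : christoffel h = christoffel g) : riemannUp h = riemannUp g := by
  unfold riemannUp
  rw [hΓ]

/-- Curvature matrices are skew-adjoint for the metric. -/
theorem curvMatrix_skew (hg : SmoothEntries g) (hs : ∀ x, (g x)ᵀ = g x)
    (hu : ∀ x, IsUnit (g x).det) (c d : Fin 4) (x : Fin 4 → ℝ) :
    (curvMatrix g c d x)ᵀ * g x + g x * curvMatrix g c d x = 0 := by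
  have hΓ := connMatrix_smooth hg hu
  have hd : ∀ i, matPd i g = fun y => (connMatrix g i y)ᵀ * g y + g y * connMatrix g i y :=
    fun i => funext fun y => matPd_metric hs hu i y
  have key : ∀ c d, matPd c (matPd d g) x
      = (matPd c (connMatrix g d) x)ᵀ * g x
        + (connMatrix g d x)ᵀ * ((connMatrix g c x)ᵀ * g x + g x * connMatrix g c x)
        + (((connMatrix g c x)ᵀ * g x + g x * connMatrix g c x) * connMatrix g d x
        + g x * matPd c (connMatrix g d) x) := by
    intro c d
    rw [hd d, matPd_add ((hΓ d).transpose.mul hg) (hg.mul (hΓ d)),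
      matPd_mul (hΓ d).transpose hg, matPd_mul hg (hΓ d), hd c, matPd_transpose]
  have hcomm := matPd_comm hg c d x
  rw [key, key, ← sub_eq_zero] at hcomm
  rw [curvMatrix_eq, ← hcomm]
  simp only [Matrix.transpose_add, Matrix.transpose_sub, Matrix.transpose_mul]
  noncomm_ring

/-- Curvature matrices commute with a parallel endomorphism field. -/
theorem curvMatrix_commute (hg : SmoothEntries g) (hu : ∀ x, IsUnit (g x).det)
    (hj : SmoothEntries j)
    (hpar : ∀ i x, matPd i j x = j x * connMatrix g i x - connMatrix g i x * j x)
    (c d : Fin 4) (x : Fin 4 → ℝ) :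
    j x * curvMatrix g c d x = curvMatrix g c d x * j x := by
  have hΓ := connMatrix_smooth hg hu
  have hd : ∀ i, matPd i j = fun y => j y * connMatrix g i y - connMatrix g i y * j y :=
    fun i => funext fun y => hpar i y
  have key : ∀ c d, matPd c (matPd d j) x
      = (j x * connMatrix g c x - connMatrix g c x * j x) * connMatrix g d x
        + j x * matPd c (connMatrix g d) x
        - (matPd c (connMatrix g d) x * j x
        + connMatrix g d x * (j x * connMatrix g c x - connMatrix g c x * j x)) := by
    intro c d
    rw [hd d, matPd_sub (hj.mul (hΓ d)) ((hΓ d).mul hj),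
      matPd_mul (hΓ d) hj, matPd_mul hj (hΓ d), hd c]
  have hcomm := matPd_comm hj c d x
  rw [key, key, ← sub_eq_zero] at hcomm
  rw [curvMatrix_eq, ← sub_eq_zero, ← hcomm]
  noncomm_ring

/-- The differential Bianchi identity, in terms of the connection matrices. -/
theorem curvMatrix_second_bianchi (hg : SmoothEntries g) (hu : ∀ x, IsUnit (g x).det)
    (e c d : Fin 4) (x : Fin 4 → ℝ) :
    (matPd e (curvMatrix g c d) x + connMatrix g e x * curvMatrix g c d x
        - curvMatrix g c d x * connMatrix g e x)
      + (matPd c (curvMatrix g d e) x + connMatrix g c x * curvMatrix g d e x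
        - curvMatrix g d e x * connMatrix g c x)
      + (matPd d (curvMatrix g e c) x + connMatrix g d x * curvMatrix g e c x
        - curvMatrix g e c x * connMatrix g d x) = 0 := by
  have hΓ := connMatrix_smooth hg hu
  have key : ∀ e c d, matPd e (curvMatrix g c d) x
      = matPd e (matPd c (connMatrix g d)) x - matPd e (matPd d (connMatrix g c)) x
        + ((matPd e (connMatrix g c) x * connMatrix g d x
          + connMatrix g c x * matPd e (connMatrix g d) x)
        - (matPd e (connMatrix g d) x * connMatrix g c x
          + connMatrix g d x * matPd e (connMatrix g c) x)) := by
    intro e c d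
    rw [show curvMatrix g c d = _ from funext fun x => curvMatrix_eq c d x,
      matPd_add (((hΓ d).matPd c).sub ((hΓ c).matPd d))
        (((hΓ c).mul (hΓ d)).sub ((hΓ d).mul (hΓ c))),
      matPd_sub ((hΓ d).matPd c) ((hΓ c).matPd d),
      matPd_sub ((hΓ c).mul (hΓ d)) ((hΓ d).mul (hΓ c)),
      matPd_mul (hΓ c) (hΓ d), matPd_mul (hΓ d) (hΓ c)]
  rw [key e c d, key c d e, key d e c, matPd_comm (hΓ d) c e, matPd_comm (hΓ e) c d,
    matPd_comm (hΓ c) e d, curvMatrix_eq, curvMatrix_eq, curvMatrix_eq]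
  noncomm_ring

end Connection

section CurvatureAlgebra

/-- A positive definite form and a compatible traceless involution admit an orthonormal
eigenframe. -/
theorem exists_orthonormal_eigenframe {g j : Matrix (Fin 4) (Fin 4) ℝ} (hg : g.PosDef)
    (hj2 : j * j = 1) (hiso : jᵀ * g * j = g) (htr : j.trace = 0) :
    ∃ P : Matrix (Fin 4) (Fin 4) ℝ, Pᵀ * g * P = 1 ∧
      j * P = P * Matrix.diagonal ![-1, -1, 1, 1] := by
  open scoped MatrixOrder in
  obtain ⟨B, hB, rfl⟩ := CStarAlgebra.isStrictlyPositive_iff_eq_star_mul_self.mp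
    hg.isStrictlyPositive
  have hBd : IsUnit B.det := (Matrix.isUnit_iff_isUnit_det B).1 hB
  have hsa : jᵀ * (Bᵀ * B) = Bᵀ * B * j := by
    calc jᵀ * (Bᵀ * B) = jᵀ * (star B * B) * j * j := by
          rw [Matrix.mul_assoc _ j j, hj2, Matrix.mul_one]; rfl
      _ = Bᵀ * B * j := by rw [hiso]; rfl
  have hA : (B * j * B⁻¹).IsHermitian := by
    have h1 : Bᵀ * (B * j * B⁻¹) = Bᵀ * (B * j * B⁻¹)ᵀ := by
      rw [Matrix.transpose_mul, Matrix.transpose_mul, ← Matrix.mul_assoc Bᵀ (B⁻¹)ᵀ,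
        ← Matrix.transpose_mul, Matrix.nonsing_inv_mul _ hBd, Matrix.transpose_one, Matrix.one_mul,
        ← Matrix.mul_assoc, ← Matrix.mul_assoc, ← hsa, Matrix.mul_assoc, Matrix.mul_assoc Bᵀ,
        Matrix.mul_nonsing_inv _ hBd, Matrix.mul_one]
    have hBt : IsUnit Bᵀ.det := by rwa [Matrix.det_transpose]
    have h2 := congrArg (Bᵀ⁻¹ * ·) h1
    simp only [← Matrix.mul_assoc, Matrix.nonsing_inv_mul _ hBt, Matrix.one_mul] at h2
    rw [Matrix.IsHermitian, Matrix.conjTranspose_eq_transpose_of_trivial]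
    simpa [Matrix.mul_assoc] using h2.symm
  obtain ⟨U, μ, hU, hAU⟩ : ∃ (U : Matrix (Fin 4) (Fin 4) ℝ) (μ : Fin 4 → ℝ),
      Uᵀ * U = 1 ∧ B * j * B⁻¹ * U = U * Matrix.diagonal μ := by
    refine ⟨hA.eigenvectorUnitary, hA.eigenvalues,
      Unitary.coe_star_mul_self hA.eigenvectorUnitary, ?_⟩
    have h := congrArg (· * (hA.eigenvectorUnitary : Matrix (Fin 4) (Fin 4) ℝ)) hA.spectral_theorem
    simp only [Unitary.conjStarAlgAut_apply] at h
    rw [Matrix.mul_assoc _ (star _), Unitary.coe_star_mul_self, Matrix.mul_one] at h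
    exact h
  have hBB : star B * B = Bᵀ * B := rfl
  have hP : (B⁻¹ * U)ᵀ * (star B * B) * (B⁻¹ * U) = 1 := by
    calc (B⁻¹ * U)ᵀ * (star B * B) * (B⁻¹ * U)
        = Uᵀ * ((B * B⁻¹)ᵀ * (B * B⁻¹)) * U := by
          simp only [Matrix.transpose_mul, Matrix.mul_assoc, hBB]
      _ = 1 := by simp [Matrix.mul_nonsing_inv _ hBd, hU]
  have hjP : j * (B⁻¹ * U) = B⁻¹ * U * Matrix.diagonal μ := by
    calc j * (B⁻¹ * U) = B⁻¹ * (B * j * B⁻¹ * U) := by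
          simp only [← Matrix.mul_assoc, Matrix.nonsing_inv_mul _ hBd, Matrix.one_mul]
      _ = _ := by rw [hAU, Matrix.mul_assoc]
  generalize B⁻¹ * U = P at hP hjP
  generalize star B * B = g at *
  have hsq : ∀ i, μ i * μ i = 1 := by
    have h1 : P * (Matrix.diagonal μ * Matrix.diagonal μ) = P := by
      rw [← Matrix.mul_assoc, ← hjP, Matrix.mul_assoc, ← hjP, ← Matrix.mul_assoc, hj2,
        Matrix.one_mul]
    have h2 := congrArg (Pᵀ * g * ·) h1
    simp only [← Matrix.mul_assoc, hP, Matrix.one_mul, Matrix.diagonal_mul_diagonal] at h2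
    intro i
    simpa using congrFun (congrFun h2 i) i
  have hsum : ∑ i, μ i = 0 := by
    have hP' : P * (Pᵀ * g) = 1 := mul_eq_one_comm.1 hP
    rw [← Matrix.trace_diagonal, ← htr]
    calc (Matrix.diagonal μ).trace = (Pᵀ * g * (P * Matrix.diagonal μ)).trace := by
          rw [← Matrix.mul_assoc, hP, Matrix.one_mul]
      _ = j.trace := by
          rw [← hjP, ← Matrix.mul_assoc, Matrix.trace_mul_comm, ← Matrix.mul_assoc,
            hP', Matrix.one_mul]
  obtain ⟨σ, hσ⟩ : ∃ σ : Equiv.Perm (Fin 4), μ ∘ σ = ![-1, -1, 1, 1] := by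
    refine ⟨Tuple.sort μ, ?_⟩
    have hmono := Tuple.monotone_sort μ
    have hsum' : ∑ i, (μ ∘ Tuple.sort μ) i = 0 := by
      rw [← hsum]
      exact Equiv.sum_comp (Tuple.sort μ) μ
    have hval : ∀ i, (μ ∘ Tuple.sort μ) i = 1 ∨ (μ ∘ Tuple.sort μ) i = -1 := fun i =>
      mul_self_eq_one_iff.1 (hsq _)
    generalize μ ∘ Tuple.sort μ = ν at *
    have h01 := hmono (show (0 : Fin 4) ≤ 1 by decide)
    have h12 := hmono (show (1 : Fin 4) ≤ 2 by decide)
    have h23 := hmono (show (2 : Fin 4) ≤ 3 by decide)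
    rw [Fin.sum_univ_four] at hsum'
    have h : ν 0 = -1 ∧ ν 1 = -1 ∧ ν 2 = 1 ∧ ν 3 = 1 := by
      refine ⟨?_, ?_, ?_, ?_⟩ <;>
      rcases hval 0 with h0 | h0 <;> rcases hval 1 with h1 | h1 <;>
        rcases hval 2 with h2 | h2 <;> rcases hval 3 with h3 | h3 <;> linarith
    funext i
    fin_cases i <;> simp [h]
  refine ⟨P.submatrix id σ, ?_, ?_⟩
  · ext a b
    have := congrFun (congrFun hP (σ a)) (σ b)
    simpa [Matrix.mul_apply, Matrix.one_apply] using this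
  · rw [← hσ]
    ext a b
    have := congrFun (congrFun hjP a) (σ b)
    simpa [Matrix.mul_apply, Matrix.diagonal_apply] using this

theorem trace_eq_zero_of_finrank_eigenspace {j : Matrix (Fin 4) (Fin 4) ℝ} (hj2 : j * j = 1)
    (hrank : Module.finrank ℝ (Module.End.eigenspace (Matrix.toLin' j) 1) = 2) :
    j.trace = 0 := by
  have hproj : LinearMap.IsProj (Module.End.eigenspace (Matrix.toLin' j) 1)
      (Matrix.toLin' ((1 / 2 : ℝ) • (1 + j))) := by
    constructor
    · intro v
      rw [Module.End.mem_eigenspace_iff, one_smul, ← LinearMap.comp_apply, ← Matrix.toLin'_mul]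
      congr 2
      rw [Matrix.mul_smul, Matrix.mul_add, hj2, Matrix.mul_one, add_comm]
    · intro v hv
      rw [Module.End.mem_eigenspace_iff, one_smul] at hv
      simp only [map_smul, map_add, Matrix.toLin'_one, LinearMap.smul_apply, LinearMap.add_apply,
        LinearMap.id_apply, hv]
      module
  have := hproj.trace
  rw [hrank, Matrix.trace_toLin'_eq] at this
  simp [Matrix.trace_smul, Matrix.trace_add] at this
  linarith

/-- In an orthonormal eigenframe the only essential components of a curvature tensor commuting with
the involution are the two sectional curvatures of the eigenplanes. -/
theorem curvature_in_frame (R : Fin 4 → Fin 4 → Fin 4 → Fin 4 → ℝ)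
    (hskew : ∀ a b c d, R b a c d = -R a b c d) (hanti : ∀ a b c d, R a b d c = -R a b c d)
    (hbianchi : ∀ a b c d, R a b c d + R a c d b + R a d b c = 0)
    (hj : ∀ a b c d, ![(-1 : ℝ), -1, 1, 1] a * R a b c d = ![(-1 : ℝ), -1, 1, 1] b * R a b c d)
    (P Q : Matrix (Fin 4) (Fin 4) ℝ) (hP : P = Matrix.diagonal ![0, 0, 1, 1])
    (hQ : Q = Matrix.diagonal ![1, 1, 0, 0]) (a b c d : Fin 4) :
    R a b c d = R 2 3 2 3 * (P a c * P b d - P a d * P b c)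
      + R 0 1 0 1 * (Q a c * Q b d - Q a d * Q b c) := by
  have hpair : ∀ a b c d, R a b c d = R c d a b := by
    intro a b c d
    linarith [hbianchi a b c d, hbianchi b c d a, hbianchi c d a b, hbianchi d a b c,
      hskew a b c d, hskew a c d b, hskew a d b c, hskew b c d a, hskew b d a c, hskew c d a b,
      hanti a b c d, hanti a c b d, hanti a d b c, hanti b c a d, hanti b d a c, hanti c d a b,
      hskew a c b d, hskew b d c a, hskew b c a d, hskew a d c b, hanti c a d b, hanti d a b c,
      hanti c b d a, hanti d b a c, hanti d c a b, hanti b a c d, hskew c d b a]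
  have hsign : ∀ a b : Fin 4, ¬(a < 2 ↔ b < 2) →
      ![(-1 : ℝ), -1, 1, 1] a - ![(-1 : ℝ), -1, 1, 1] b ≠ 0 := by
    intro a b hab
    fin_cases a <;> fin_cases b <;> first | (exact absurd (by decide) hab) | norm_num
  have hmix : ∀ a b c d, ¬(a < 2 ↔ b < 2) → R a b c d = 0 := by
    intro a b c d hab
    have := hj a b c d
    rw [← sub_eq_zero, ← sub_mul] at this
    exact (mul_eq_zero.1 this).resolve_left (hsign a b hab)
  have hzero : ∀ a b c d, ¬((a < 2 ↔ b < 2) ∧ (c < 2 ↔ d < 2) ∧ (a < 2 ↔ c < 2)) →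
      R a b c d = 0 := by
    intro a b c d h
    by_cases hab : a < 2 ↔ b < 2
    · by_cases hcd : c < 2 ↔ d < 2
      · linarith [hbianchi a b c d, hmix a c d b (by tauto), hmix a d b c (by tauto)]
      · rw [hpair]
        exact hmix c d a b hcd
    · exact hmix a b c d hab
  have hdiag : ∀ a c d, R a a c d = 0 := fun a c d => by linarith [hskew a a c d]
  have hdiag' : ∀ a b c, R a b c c = 0 := fun a b c => by linarith [hanti a b c c]
  subst hP hQ
  fin_cases a <;> fin_cases b <;> fin_cases c <;> fin_cases d <;>
    first
    | (rw [hzero _ _ _ _ (by decide)]; simp)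
    | simp [hdiag, hdiag', hskew 0 1, hskew 2 3, hanti _ _ 0 1, hanti _ _ 2 3]

end CurvatureAlgebra

section FrameChange

/-- Components of a covariant 4-tensor in the frame given by the columns of `P`. -/
def tensorInFrame (P : Matrix (Fin 4) (Fin 4) ℝ) (R : Fin 4 → Fin 4 → Fin 4 → Fin 4 → ℝ)
    (a b c d : Fin 4) : ℝ :=
  ∑ m, ∑ n, ∑ k, ∑ l, P m a * P n b * P k c * P l d * R m n k l

variable (P : Matrix (Fin 4) (Fin 4) ℝ) (R S : Fin 4 → Fin 4 → Fin 4 → Fin 4 → ℝ)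

theorem tensorInFrame_add (a b c d : Fin 4) :
    tensorInFrame P (fun m n k l => R m n k l + S m n k l) a b c d
      = tensorInFrame P R a b c d + tensorInFrame P S a b c d := by
  simp only [tensorInFrame, mul_add, Finset.sum_add_distrib]

theorem tensorInFrame_smul (t : ℝ) (a b c d : Fin 4) :
    tensorInFrame P (fun m n k l => t * R m n k l) a b c d = t * tensorInFrame P R a b c d := by
  simp only [tensorInFrame, Finset.mul_sum]
  refine Finset.sum_congr rfl fun m _ => Finset.sum_congr rfl fun n _ =>
    Finset.sum_congr rfl fun k _ => Finset.sum_congr rfl fun l _ => by ring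

theorem tensorInFrame_neg (a b c d : Fin 4) :
    tensorInFrame P (fun m n k l => -R m n k l) a b c d = -tensorInFrame P R a b c d := by
  simpa using tensorInFrame_smul P R (-1) a b c d

theorem tensorInFrame_sub (a b c d : Fin 4) :
    tensorInFrame P (fun m n k l => R m n k l - S m n k l) a b c d
      = tensorInFrame P R a b c d - tensorInFrame P S a b c d := by
  simp only [sub_eq_add_neg, tensorInFrame_add, tensorInFrame_neg]

theorem tensorInFrame_swap_first (a b c d : Fin 4) :
    tensorInFrame P (fun m n k l => R n m k l) a b c d = tensorInFrame P R b a c d := by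
  unfold tensorInFrame
  rw [Finset.sum_comm]
  refine Finset.sum_congr rfl fun m _ => Finset.sum_congr rfl fun n _ =>
    Finset.sum_congr rfl fun k _ => Finset.sum_congr rfl fun l _ => by ring

theorem tensorInFrame_swap_middle (a b c d : Fin 4) :
    tensorInFrame P (fun m n k l => R m k n l) a b c d = tensorInFrame P R a c b d := by
  unfold tensorInFrame
  refine Finset.sum_congr rfl fun m _ => ?_
  rw [Finset.sum_comm]
  refine Finset.sum_congr rfl fun n _ => Finset.sum_congr rfl fun k _ =>
    Finset.sum_congr rfl fun l _ => by ring

theorem tensorInFrame_swap_last (a b c d : Fin 4) :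
    tensorInFrame P (fun m n k l => R m n l k) a b c d = tensorInFrame P R a b d c := by
  unfold tensorInFrame
  refine Finset.sum_congr rfl fun m _ => Finset.sum_congr rfl fun n _ => ?_
  rw [Finset.sum_comm]
  refine Finset.sum_congr rfl fun k _ => Finset.sum_congr rfl fun l _ => by ring

theorem tensorInFrame_product (A B : Matrix (Fin 4) (Fin 4) ℝ) (a b c d : Fin 4) :
    tensorInFrame P (fun m n k l => A m k * B n l) a b c d
      = (Pᵀ * A * P) a c * (Pᵀ * B * P) b d := by
  have h : ∀ (C : Matrix (Fin 4) (Fin 4) ℝ) a c,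
      (Pᵀ * C * P) a c = ∑ m, ∑ k, P m a * C m k * P k c := by
    intro C a c
    simp only [Matrix.mul_apply, Matrix.transpose_apply, Finset.sum_mul]
    exact Finset.sum_comm
  rw [h, h, Finset.sum_mul_sum]
  simp only [tensorInFrame, Finset.sum_mul_sum]
  refine Finset.sum_congr rfl fun m _ => Finset.sum_congr rfl fun n _ =>
    Finset.sum_congr rfl fun k _ => Finset.sum_congr rfl fun l _ => by ring

theorem tensorInFrame_eq_matrix (L : Fin 4 → Fin 4 → Matrix (Fin 4) (Fin 4) ℝ) (a b c d : Fin 4) :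
    tensorInFrame P (fun m n k l => L k l m n) a b c d
      = ∑ k, ∑ l, P k c * P l d * (Pᵀ * L k l * P) a b := by
  have h : ∀ (C : Matrix (Fin 4) (Fin 4) ℝ) a c,
      (Pᵀ * C * P) a c = ∑ m, ∑ k, P m a * C m k * P k c := by
    intro C a c
    simp only [Matrix.mul_apply, Matrix.transpose_apply, Finset.sum_mul]
    exact Finset.sum_comm
  simp only [h, tensorInFrame, Finset.mul_sum]
  calc _ = ∑ m, ∑ k, ∑ n, ∑ l, P m a * P n b * P k c * P l d * L k l m n :=
        Finset.sum_congr rfl fun m _ => Finset.sum_comm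
    _ = ∑ k, ∑ m, ∑ n, ∑ l, P m a * P n b * P k c * P l d * L k l m n := Finset.sum_comm
    _ = ∑ k, ∑ m, ∑ l, ∑ n, P m a * P n b * P k c * P l d * L k l m n :=
        Finset.sum_congr rfl fun k _ => Finset.sum_congr rfl fun m _ => Finset.sum_comm
    _ = ∑ k, ∑ l, ∑ m, ∑ n, P m a * P n b * P k c * P l d * L k l m n :=
        Finset.sum_congr rfl fun k _ => Finset.sum_comm
    _ = _ := Finset.sum_congr rfl fun k _ => Finset.sum_congr rfl fun l _ =>
        Finset.sum_congr rfl fun m _ => Finset.sum_congr rfl fun n _ => by ring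

variable {P R}

theorem eq_zero_of_tensorInFrame_eq_zero (hP : IsUnit P.det)
    (h : ∀ a b c d, tensorInFrame P R a b c d = 0) (a b c d : Fin 4) : R a b c d = 0 := by
  have key : ∀ f : Fin 4 → ℝ, (∀ a, ∑ m, P m a * f m = 0) → ∀ m, f m = 0 := by
    intro f hf m
    refine congrFun (Matrix.eq_zero_of_vecMul_eq_zero hP.ne_zero (v := f) ?_) m
    funext a
    simpa [Matrix.vecMul, dotProduct, mul_comm] using hf a
  have h1 : ∀ m b c d, ∑ n, ∑ k, ∑ l, P n b * P k c * P l d * R m n k l = 0 := by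
    intro m b c d
    refine key (fun m => ∑ n, ∑ k, ∑ l, P n b * P k c * P l d * R m n k l) (fun a => ?_) m
    rw [← h a b c d]
    simp only [tensorInFrame, Finset.mul_sum, mul_assoc]
  have h2 : ∀ m n c d, ∑ k, ∑ l, P k c * P l d * R m n k l = 0 := by
    intro m n c d
    refine key (fun n => ∑ k, ∑ l, P k c * P l d * R m n k l) (fun b => ?_) n
    rw [← h1 m b c d]
    simp only [Finset.mul_sum, mul_assoc]
  have h3 : ∀ m n k d, ∑ l, P l d * R m n k l = 0 := by
    intro m n k d
    refine key (fun k => ∑ l, P l d * R m n k l) (fun c => ?_) k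
    rw [← h2 m n c d]
    simp only [Finset.mul_sum, mul_assoc]
  exact key _ (h3 a b c) d

end FrameChange

section ProductCurvature

/-- The algebraic curvature tensor of constant curvature one associated to a bilinear form. -/
def unitCurvature (A : Matrix (Fin 4) (Fin 4) ℝ) (a b c d : Fin 4) : ℝ :=
  A a c * A b d - A a d * A b c

theorem tensorInFrame_unitCurvature (P A : Matrix (Fin 4) (Fin 4) ℝ) :
    tensorInFrame P (unitCurvature A) = unitCurvature (Pᵀ * A * P) := by
  funext a b c d
  rw [show unitCurvature A = fun m n k l => A m k * A n l - A m l * A n k from rfl,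
    tensorInFrame_sub, tensorInFrame_product,
    tensorInFrame_swap_last P (fun m n k l => A m k * A n l), tensorInFrame_product]
  rfl

variable {g j : Matrix (Fin 4) (Fin 4) ℝ}

/-- A curvature tensor commuting with a compatible traceless involution is that of a product of
two surfaces. -/
theorem exists_product_curvature (hg : g.PosDef) (hj2 : j * j = 1) (hiso : jᵀ * g * j = g)
    (htr : j.trace = 0) (L : Fin 4 → Fin 4 → Matrix (Fin 4) (Fin 4) ℝ)
    (hskew : ∀ c d, (L c d)ᵀ = -L c d) (hanti : ∀ c d, L d c = -L c d)
    (hbianchi : ∀ a b c d, L c d a b + L d b a c + L b c a d = 0)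
    (hcomm : ∀ c d, jᵀ * L c d = L c d * j) :
    ∃ K₁ K₂ : ℝ, ∀ a b c d, L c d a b
      = K₁ * unitCurvature ((1 / 2 : ℝ) • (g + jᵀ * g)) a b c d
        + K₂ * unitCurvature ((1 / 2 : ℝ) • (g - jᵀ * g)) a b c d := by
  obtain ⟨P, hP, hjP⟩ := exists_orthonormal_eigenframe hg hj2 hiso htr
  have hdet : IsUnit P.det := by
    rw [← Matrix.isUnit_iff_isUnit_det]
    exact IsUnit.of_mul_eq_one_right _ hP
  have hPj : Pᵀ * jᵀ = Matrix.diagonal ![-1, -1, 1, 1] * Pᵀ := by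
    rw [← Matrix.transpose_mul, hjP, Matrix.transpose_mul, Matrix.diagonal_transpose]
  have hPg' : Pᵀ * (jᵀ * g) * P = Matrix.diagonal ![-1, -1, 1, 1] := by
    rw [← Matrix.mul_assoc, hPj, Matrix.mul_assoc, Matrix.mul_assoc, ← Matrix.mul_assoc Pᵀ, hP,
      Matrix.mul_one]
  set R : Fin 4 → Fin 4 → Fin 4 → Fin 4 → ℝ := fun m n k l => L k l m n with hR
  have hframe := curvature_in_frame (tensorInFrame P R)
    (fun a b c d => by
      rw [← tensorInFrame_swap_first, ← tensorInFrame_neg]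
      congr 1
      funext m n k l
      simpa using congrFun (congrFun (hskew k l) m) n)
    (fun a b c d => by
      rw [← tensorInFrame_swap_last, ← tensorInFrame_neg]
      congr 1
      funext m n k l
      simp [hR, hanti k l])
    (fun a b c d => by
      have h₂ : tensorInFrame P R a c d b
          = tensorInFrame P (fun m n k l => R m k l n) a b c d := by
        rw [tensorInFrame_swap_middle P (fun m n k l => R m n l k), tensorInFrame_swap_last]
      have h₃ : tensorInFrame P R a d b c
          = tensorInFrame P (fun m n k l => R m l n k) a b c d := by
        rw [tensorInFrame_swap_last P (fun m n k l => R m k n l), tensorInFrame_swap_middle]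
      rw [h₂, h₃, ← tensorInFrame_add, ← tensorInFrame_add]
      simp only [hR, hbianchi]
      simp [tensorInFrame])
    (fun a b c d => by
      rw [tensorInFrame_eq_matrix, Finset.mul_sum, Finset.mul_sum]
      refine Finset.sum_congr rfl fun k _ => ?_
      rw [Finset.mul_sum, Finset.mul_sum]
      refine Finset.sum_congr rfl fun l _ => ?_
      have h : Matrix.diagonal ![-1, -1, 1, 1] * (Pᵀ * L k l * P)
          = Pᵀ * L k l * P * Matrix.diagonal ![-1, -1, 1, 1] := by
        rw [Matrix.mul_assoc _ P, ← hjP, ← Matrix.mul_assoc, ← Matrix.mul_assoc, ← hPj,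
          Matrix.mul_assoc Pᵀ, hcomm]
        simp only [Matrix.mul_assoc]
      have h' := congrFun (congrFun h a) b
      rw [Matrix.diagonal_mul, Matrix.mul_diagonal] at h'
      linear_combination P k c * P l d * h')
    (Pᵀ * ((1 / 2 : ℝ) • (g + jᵀ * g)) * P) (Pᵀ * ((1 / 2 : ℝ) • (g - jᵀ * g)) * P)
    (by
      rw [Matrix.mul_smul, Matrix.smul_mul, Matrix.mul_add, Matrix.add_mul, hP, hPg']
      ext a b
      fin_cases a <;> fin_cases b <;> norm_num)
    (by
      rw [Matrix.mul_smul, Matrix.smul_mul, Matrix.mul_sub, Matrix.sub_mul, hP, hPg']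
      ext a b
      fin_cases a <;> fin_cases b <;> norm_num)
  refine ⟨tensorInFrame P R 2 3 2 3, tensorInFrame P R 0 1 0 1, fun a b c d => ?_⟩
  refine sub_eq_zero.1 (eq_zero_of_tensorInFrame_eq_zero (P := P) (R := fun a b c d =>
    R a b c d - (tensorInFrame P R 2 3 2 3 * unitCurvature ((1 / 2 : ℝ) • (g + jᵀ * g)) a b c d
      + tensorInFrame P R 0 1 0 1 * unitCurvature ((1 / 2 : ℝ) • (g - jᵀ * g)) a b c d))
    hdet (fun a b c d => ?_) a b c d)
  rw [tensorInFrame_sub, tensorInFrame_add, tensorInFrame_smul, tensorInFrame_smul,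
    tensorInFrame_unitCurvature, tensorInFrame_unitCurvature, hframe, sub_eq_zero]
  rfl

end ProductCurvature

section Splitting

/-- Projection onto the `1`-eigenspace of an involution. -/
noncomputable def plusProj (j : Matrix (Fin 4) (Fin 4) ℝ) : Matrix (Fin 4) (Fin 4) ℝ :=
  (1 / 2 : ℝ) • (1 + j)

/-- Projection onto the `-1`-eigenspace of an involution. -/
noncomputable def minusProj (j : Matrix (Fin 4) (Fin 4) ℝ) : Matrix (Fin 4) (Fin 4) ℝ :=
  (1 / 2 : ℝ) • (1 - j)

variable {g j : Matrix (Fin 4) (Fin 4) ℝ}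

theorem plusProj_add_minusProj : plusProj j + minusProj j = 1 := by
  unfold plusProj minusProj
  module

theorem plusProj_sub_minusProj : plusProj j - minusProj j = j := by
  unfold plusProj minusProj
  module

theorem plusProj_mul_self (hj2 : j * j = 1) : plusProj j * plusProj j = plusProj j := by
  simp only [plusProj, Matrix.smul_mul, Matrix.mul_smul, mul_add, add_mul, hj2, mul_one, one_mul]
  module

theorem minusProj_mul_self (hj2 : j * j = 1) : minusProj j * minusProj j = minusProj j := by
  simp only [minusProj, Matrix.smul_mul, Matrix.mul_smul, mul_sub, sub_mul, hj2, mul_one, one_mul]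
  module

theorem plusProj_mul_minusProj (hj2 : j * j = 1) : plusProj j * minusProj j = 0 := by
  simp only [plusProj, minusProj, Matrix.smul_mul, Matrix.mul_smul, mul_sub, add_mul, hj2, mul_one,
    one_mul]
  module

theorem minusProj_mul_plusProj (hj2 : j * j = 1) : minusProj j * plusProj j = 0 := by
  simp only [plusProj, minusProj, Matrix.smul_mul, Matrix.mul_smul, mul_add, sub_mul, hj2, mul_one,
    one_mul]
  module

theorem trace_plusProj (htr : j.trace = 0) : (plusProj j).trace = 2 := by
  simp [plusProj, htr]
  norm_num

theorem trace_minusProj (htr : j.trace = 0) : (minusProj j).trace = 2 := by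
  simp [minusProj, htr]
  norm_num

theorem transpose_mul_eq_mul (hj2 : j * j = 1) (hiso : jᵀ * g * j = g) : jᵀ * g = g * j := by
  calc jᵀ * g = jᵀ * g * j * j := by rw [Matrix.mul_assoc _ j j, hj2, Matrix.mul_one]
    _ = g * j := by rw [hiso]

theorem mul_plusProj_isSymm (hs : gᵀ = g) (h : jᵀ * g = g * j) :
    (g * plusProj j)ᵀ = g * plusProj j := by
  simp [plusProj, mul_add, hs, h]

theorem mul_minusProj_isSymm (hs : gᵀ = g) (h : jᵀ * g = g * j) :
    (g * minusProj j)ᵀ = g * minusProj j := by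
  simp [minusProj, mul_sub, hs, h]

/-- Contraction of the first and third slots of a product tensor. -/
theorem sum_inv_mul_trace (hs : gᵀ = g) (hu : IsUnit g.det) (σ : Matrix (Fin 4) (Fin 4) ℝ)
    (t : ℝ) : ∑ a, ∑ c, g⁻¹ a c * ((g * σ) a c * t) = σ.trace * t := by
  have h : σ.trace = (g⁻¹ᵀ * (g * σ)).trace := by
    rw [Matrix.transpose_nonsing_inv, hs, ← Matrix.mul_assoc, Matrix.nonsing_inv_mul _ hu,
      Matrix.one_mul]
  rw [h]
  simp only [Matrix.trace, Matrix.diag, Matrix.mul_apply (M := g⁻¹ᵀ), Matrix.transpose_apply,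
    Finset.sum_mul]
  rw [Finset.sum_comm]
  exact Finset.sum_congr rfl fun a _ => Finset.sum_congr rfl fun c _ => by ring

theorem sum_inv_mul_cross (hs : gᵀ = g) (hu : IsUnit g.det) (σ τ : Matrix (Fin 4) (Fin 4) ℝ)
    (b d : Fin 4) :
    ∑ a, ∑ c, g⁻¹ a c * ((g * σ) a d * (g * τ) b c) = (g * (τ * σ)) b d := by
  have h : g * (τ * σ) = g * τ * g⁻¹ᵀ * (g * σ) := by
    rw [Matrix.transpose_nonsing_inv, hs, Matrix.mul_assoc (g * τ), ← Matrix.mul_assoc g⁻¹,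
      Matrix.nonsing_inv_mul _ hu, Matrix.one_mul, Matrix.mul_assoc]
  rw [h, Matrix.mul_apply]
  refine Finset.sum_congr rfl fun a _ => ?_
  rw [Matrix.mul_apply (M := g * τ), Finset.sum_mul]
  exact Finset.sum_congr rfl fun c _ => by rw [Matrix.transpose_apply]; ring

theorem sum_inv_mul_unitCurvature (hs : gᵀ = g) (hu : IsUnit g.det)
    {σ : Matrix (Fin 4) (Fin 4) ℝ} (hσ : σ * σ = σ) (htr : σ.trace = 2) (b d : Fin 4) :
    ∑ a, ∑ c, g⁻¹ a c * unitCurvature (g * σ) a b c d = (g * σ) b d := by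
  simp only [unitCurvature, mul_sub, Finset.sum_sub_distrib]
  rw [sum_inv_mul_trace hs hu, sum_inv_mul_cross hs hu, hσ, htr]
  ring

end Splitting

section ProductMetric

variable {g j : (Fin 4 → ℝ) → Matrix (Fin 4) (Fin 4) ℝ}

theorem riemannLow_eq (h : (Fin 4 → ℝ) → Matrix (Fin 4) (Fin 4) ℝ) (a b c d : Fin 4)
    (x : Fin 4 → ℝ) : riemannLow h a b c d x = (h x * curvMatrix h c d x) a b := by
  simp [riemannLow, curvMatrix, Matrix.mul_apply]

/-- The curvature of a metric with a parallel isometric paracomplex structure is pointwise that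
of a product of two surfaces. -/
theorem exists_riemannLow_eq (hg : SmoothEntries g) (hj : SmoothEntries j)
    (hs : ∀ x, (g x)ᵀ = g x) (hpos : ∀ x, (g x).PosDef) (hj2 : ∀ x, j x * j x = 1)
    (hiso : ∀ x, (j x)ᵀ * g x * j x = g x) (htr : ∀ x, (j x).trace = 0)
    (hpar : ∀ i x, matPd i j x = j x * connMatrix g i x - connMatrix g i x * j x)
    (x : Fin 4 → ℝ) :
    ∃ K₁ K₂ : ℝ, ∀ a b c d, riemannLow g a b c d x
      = K₁ * unitCurvature (g x * plusProj (j x)) a b c d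
        + K₂ * unitCurvature (g x * minusProj (j x)) a b c d := by
  have hu : ∀ x, IsUnit (g x).det := fun x => (hpos x).det_pos.ne'.isUnit
  have hgj := transpose_mul_eq_mul (hj2 x) (hiso x)
  have hskew : ∀ c d, (curvMatrix g c d x)ᵀ * g x = -(g x * curvMatrix g c d x) := fun c d =>
    eq_neg_of_add_eq_zero_left (curvMatrix_skew hg hs hu c d x)
  obtain ⟨K₁, K₂, hK⟩ := exists_product_curvature (hpos x) (hj2 x) (hiso x) (htr x)
    (fun c d => g x * curvMatrix g c d x)
    (fun c d => by rw [Matrix.transpose_mul, hs, hskew])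
    (fun c d => by rw [curvMatrix_swap, Matrix.mul_neg])
    (fun a b c d => by
      simp only [Matrix.mul_apply, ← Finset.sum_add_distrib, ← mul_add, curvMatrix_bianchi hs]
      simp)
    (fun c d => by
      rw [← Matrix.mul_assoc, hgj, Matrix.mul_assoc, curvMatrix_commute hg hu hj hpar,
        Matrix.mul_assoc])
  refine ⟨K₁, K₂, fun a b c d => ?_⟩
  rw [riemannLow_eq, hK, hgj]
  simp only [plusProj, minusProj, Matrix.mul_smul, Matrix.mul_add, Matrix.mul_sub, Matrix.mul_one]

theorem riemannUp_eq_of_riemannLow_eq {x : Fin 4 → ℝ} (hu : IsUnit (g x).det) {K₁ K₂ : ℝ}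
    (hK : ∀ a b c d, riemannLow g a b c d x
      = K₁ * unitCurvature (g x * plusProj (j x)) a b c d
        + K₂ * unitCurvature (g x * minusProj (j x)) a b c d) (l b c d : Fin 4) :
    riemannUp g l b c d x
      = K₁ * (plusProj (j x) l c * (g x * plusProj (j x)) b d
          - plusProj (j x) l d * (g x * plusProj (j x)) b c)
        + K₂ * (minusProj (j x) l c * (g x * minusProj (j x)) b d
          - minusProj (j x) l d * (g x * minusProj (j x)) b c) := by
  have h1 : riemannUp g l b c d x = ∑ a, (g x)⁻¹ l a * riemannLow g a b c d x := by
    simp only [riemannLow_eq]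
    rw [← Matrix.mul_apply, ← Matrix.mul_assoc, Matrix.nonsing_inv_mul _ hu, Matrix.one_mul]
    rfl
  have h2 : ∀ (σ : Matrix (Fin 4) (Fin 4) ℝ) (c : Fin 4),
      σ l c = ∑ a, (g x)⁻¹ l a * (g x * σ) a c := by
    intro σ c
    rw [← Matrix.mul_apply, ← Matrix.mul_assoc, Matrix.nonsing_inv_mul _ hu, Matrix.one_mul]
  rw [h1, h2 (plusProj (j x)) c, h2 (plusProj (j x)) d, h2 (minusProj (j x)) c,
    h2 (minusProj (j x)) d]
  simp only [hK, unitCurvature, Finset.sum_mul, Finset.mul_sum, ← Finset.sum_add_distrib,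
    ← Finset.sum_sub_distrib]
  exact Finset.sum_congr rfl fun a _ => by ring

theorem ricciT_eq_of_riemannLow_eq {x : Fin 4 → ℝ} (hu : IsUnit (g x).det) (hj2 : j x * j x = 1)
    (htr : (j x).trace = 0) {K₁ K₂ : ℝ}
    (hK : ∀ a b c d, riemannLow g a b c d x
      = K₁ * unitCurvature (g x * plusProj (j x)) a b c d
        + K₂ * unitCurvature (g x * minusProj (j x)) a b c d) (b d : Fin 4) :
    ricciT g b d x
      = K₁ * (g x * plusProj (j x)) b d + K₂ * (g x * minusProj (j x)) b d := by
  have key : ∀ σ : Matrix (Fin 4) (Fin 4) ℝ, σ * σ = σ → σ.trace = 2 →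
      ∑ a, (σ a a * (g x * σ) b d - σ a d * (g x * σ) b a) = (g x * σ) b d := by
    intro σ hσ hσt
    have h : ∑ a, σ a d * (g x * σ) b a = (g x * σ) b d := by
      conv_rhs => rw [← hσ, ← Matrix.mul_assoc, Matrix.mul_apply]
      exact Finset.sum_congr rfl fun a _ => mul_comm _ _
    have h' : ∑ a, σ a a = 2 := hσt
    rw [Finset.sum_sub_distrib, h, ← Finset.sum_mul, h']
    ring
  simp only [ricciT, riemannUp_eq_of_riemannLow_eq hu hK, Finset.sum_add_distrib,
    ← Finset.mul_sum]
  rw [key _ (plusProj_mul_self hj2) (trace_plusProj htr),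
    key _ (minusProj_mul_self hj2) (trace_minusProj htr)]

/-- The Weyl tensor of the neutral metric is proportional to the difference of the two sectional
curvatures. -/
theorem weylT_neutral_eq {g' : (Fin 4 → ℝ) → Matrix (Fin 4) (Fin 4) ℝ} {x : Fin 4 → ℝ}
    (hu : IsUnit (g x).det) (hs : (g x)ᵀ = g x) (hj2 : j x * j x = 1) (htr : (j x).trace = 0)
    (hgj : (j x)ᵀ * g x = g x * j x)
    (hg' : g' x = g x * j x) (hR : riemannUp g' = riemannUp g) {K₁ K₂ : ℝ}
    (hK : ∀ a b c d, riemannLow g a b c d x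
      = K₁ * unitCurvature (g x * plusProj (j x)) a b c d
        + K₂ * unitCurvature (g x * minusProj (j x)) a b c d) (a b c d : Fin 4) :
    weylT g' a b c d x = (K₁ - K₂) *
      ((1 / 3) * (unitCurvature (g x * plusProj (j x)) a b c d
          + unitCurvature (g x * minusProj (j x)) a b c d)
        + (1 / 6) * ((g x * plusProj (j x)) a c * (g x * minusProj (j x)) b d
          - (g x * plusProj (j x)) a d * (g x * minusProj (j x)) b c
          - (g x * minusProj (j x)) a d * (g x * plusProj (j x)) b c
          + (g x * minusProj (j x)) a c * (g x * plusProj (j x)) b d)) := by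
  have hjp : j x * plusProj (j x) = plusProj (j x) := by
    rw [plusProj, Matrix.mul_smul, Matrix.mul_add, hj2, Matrix.mul_one, add_comm]
  have hjm : j x * minusProj (j x) = -minusProj (j x) := by
    rw [minusProj, Matrix.mul_smul, Matrix.mul_sub, hj2, Matrix.mul_one, ← smul_neg, neg_sub]
  have hric : ∀ b d, ricciT g' b d x
      = K₁ * (g x * plusProj (j x)) b d + K₂ * (g x * minusProj (j x)) b d := by
    intro b d
    rw [← ricciT_eq_of_riemannLow_eq hu hj2 htr hK]
    simp only [ricciT, hR]
  have hinv : (g' x)⁻¹ = j x * (g x)⁻¹ := by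
    refine Matrix.inv_eq_left_inv ?_
    rw [hg', Matrix.mul_assoc, ← Matrix.mul_assoc _ (g x), Matrix.nonsing_inv_mul _ hu,
      Matrix.one_mul, hj2]
  have hscal : scalarT g' x = 2 * (K₁ - K₂) := by
    have h : scalarT g' x = (j x * (g x)⁻¹ *
        (K₁ • (g x * plusProj (j x)) + K₂ • (g x * minusProj (j x)))ᵀ).trace := by
      simp only [scalarT, hric, hinv, Matrix.trace, Matrix.diag, Matrix.mul_apply (N := _ᵀ)]
      rfl
    rw [h, Matrix.transpose_add, Matrix.transpose_smul, Matrix.transpose_smul,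
      mul_plusProj_isSymm hs hgj, mul_minusProj_isSymm hs hgj, ← Matrix.mul_smul, ← Matrix.mul_smul,
      ← Matrix.mul_add, Matrix.mul_assoc, ← Matrix.mul_assoc (g x)⁻¹, Matrix.nonsing_inv_mul _ hu,
      Matrix.one_mul, Matrix.mul_add, Matrix.mul_smul, Matrix.mul_smul, hjp, hjm,
      Matrix.trace_add, Matrix.trace_smul, Matrix.trace_smul, Matrix.trace_neg,
      trace_plusProj htr, trace_minusProj htr, smul_eq_mul, smul_eq_mul]
    ring
  have hlow : riemannLow g' a b c d x = K₁ * unitCurvature (g x * plusProj (j x)) a b c d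
      - K₂ * unitCurvature (g x * minusProj (j x)) a b c d := by
    have h2 : ∀ (σ : Matrix (Fin 4) (Fin 4) ℝ) (c : Fin 4),
        ∑ l, g' x a l * σ l c = (g x * (j x * σ)) a c := by
      intro σ c
      rw [← Matrix.mul_assoc, ← hg', Matrix.mul_apply]
    have hp := fun c => h2 (plusProj (j x)) c
    have hm := fun c => h2 (minusProj (j x)) c
    simp only [hjp, hjm, Matrix.mul_neg, Matrix.neg_apply] at hp hm
    have hm' := fun c => neg_eq_iff_eq_neg.2 (hm c)
    simp only [unitCurvature]
    rw [← hp, ← hp d]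
    have h3 : K₂ * ((g x * minusProj (j x)) a c * (g x * minusProj (j x)) b d
        - (g x * minusProj (j x)) a d * (g x * minusProj (j x)) b c)
        = -(K₂ * ((∑ l, g' x a l * minusProj (j x) l c) * (g x * minusProj (j x)) b d
        - (∑ l, g' x a l * minusProj (j x) l d) * (g x * minusProj (j x)) b c)) := by
      rw [hm, hm]
      ring
    rw [h3]
    simp only [riemannLow, hR, riemannUp_eq_of_riemannLow_eq hu hK, Finset.sum_mul,
      Finset.mul_sum, ← Finset.sum_add_distrib, ← Finset.sum_sub_distrib, sub_neg_eq_add]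
    exact Finset.sum_congr rfl fun l _ => by ring
  have hg'e : ∀ a c, g' x a c = (g x * plusProj (j x)) a c - (g x * minusProj (j x)) a c := by
    intro a c
    rw [← Matrix.sub_apply, ← Matrix.mul_sub, plusProj_sub_minusProj, hg']
  simp only [weylT, hlow, hric, hscal, hg'e, unitCurvature]
  ring

/-- The Weyl tensor of the neutral metric vanishes only where the two sectional curvatures agree. -/
theorem sectional_eq_of_weylT_neutral_eq_zero {g' : (Fin 4 → ℝ) → Matrix (Fin 4) (Fin 4) ℝ}
    {x : Fin 4 → ℝ} (hpos : (g x).PosDef) (hs : (g x)ᵀ = g x) (hj2 : j x * j x = 1)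
    (htr : (j x).trace = 0) (hgj : (j x)ᵀ * g x = g x * j x)
    (hg' : g' x = g x * j x) (hR : riemannUp g' = riemannUp g) {K₁ K₂ : ℝ}
    (hK : ∀ a b c d, riemannLow g a b c d x
      = K₁ * unitCurvature (g x * plusProj (j x)) a b c d
        + K₂ * unitCurvature (g x * minusProj (j x)) a b c d)
    (hW : ∀ a b c d, weylT g' a b c d x = 0) : K₁ = K₂ := by
  have hu : IsUnit (g x).det := hpos.det_pos.ne'.isUnit
  simp only [weylT_neutral_eq hu hs hj2 htr hgj hg' hR hK] at hW
  have h00 : 0 < g x 0 0 := hpos.diag_pos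
  have hsplit : (g x * plusProj (j x)) 0 0 + (g x * minusProj (j x)) 0 0 = g x 0 0 := by
    rw [← Matrix.add_apply, ← Matrix.mul_add, plusProj_add_minusProj, Matrix.mul_one]
  have hlin : ∀ U V X Y Z W : Fin 4 → Fin 4 → ℝ,
      ∑ a, ∑ c, (g x)⁻¹ a c * ((K₁ - K₂) * ((1 / 3) * (U a c + V a c)
        + (1 / 6) * (X a c - Y a c - Z a c + W a c)))
      = (K₁ - K₂) * ((1 / 3) * (∑ a, ∑ c, (g x)⁻¹ a c * U a c + ∑ a, ∑ c, (g x)⁻¹ a c * V a c)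
        + (1 / 6) * (∑ a, ∑ c, (g x)⁻¹ a c * X a c - ∑ a, ∑ c, (g x)⁻¹ a c * Y a c
          - ∑ a, ∑ c, (g x)⁻¹ a c * Z a c + ∑ a, ∑ c, (g x)⁻¹ a c * W a c)) := by
    intro U V X Y Z W
    simp only [← Finset.sum_add_distrib, ← Finset.sum_sub_distrib, Finset.mul_sum]
    exact Finset.sum_congr rfl fun a _ => Finset.sum_congr rfl fun c _ => by ring
  have hsum := hlin
    (fun a c => unitCurvature (g x * plusProj (j x)) a 0 c 0)
    (fun a c => unitCurvature (g x * minusProj (j x)) a 0 c 0)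
    (fun a c => (g x * plusProj (j x)) a c * (g x * minusProj (j x)) 0 0)
    (fun a c => (g x * plusProj (j x)) a 0 * (g x * minusProj (j x)) 0 c)
    (fun a c => (g x * minusProj (j x)) a 0 * (g x * plusProj (j x)) 0 c)
    (fun a c => (g x * minusProj (j x)) a c * (g x * plusProj (j x)) 0 0)
  simp only [hW, mul_zero, Finset.sum_const_zero] at hsum
  rw [sum_inv_mul_unitCurvature hs hu (plusProj_mul_self hj2) (trace_plusProj htr),
    sum_inv_mul_unitCurvature hs hu (minusProj_mul_self hj2) (trace_minusProj htr),
    sum_inv_mul_trace hs hu, sum_inv_mul_trace hs hu, sum_inv_mul_cross hs hu,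
    sum_inv_mul_cross hs hu, trace_plusProj htr, trace_minusProj htr,
    plusProj_mul_minusProj hj2, minusProj_mul_plusProj hj2, Matrix.mul_zero,
    Matrix.zero_apply] at hsum
  have h : (K₁ - K₂) * g x 0 0 = 0 := by
    rw [← hsplit]
    linear_combination -(3 / 2) * hsum
  exact sub_eq_zero.1 ((mul_eq_zero.1 h).resolve_right h00.ne')

end ProductMetric

section Schur

theorem sum_inv_mul_vec {g : Matrix (Fin 4) (Fin 4) ℝ} (hs : gᵀ = g) (hu : IsUnit g.det)
    (v : Fin 4 → ℝ) (e : Fin 4) : ∑ b, ∑ d, g⁻¹ b d * (v d * g b e) = v e := by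
  have h : ∀ d, ∑ b, g⁻¹ b d * g b e = (1 : Matrix (Fin 4) (Fin 4) ℝ) d e := by
    intro d
    have h' : g⁻¹ᵀ = g⁻¹ := by rw [Matrix.transpose_nonsing_inv, hs]
    rw [← Matrix.nonsing_inv_mul _ hu, Matrix.mul_apply]
    conv_rhs => rw [← h']
    rfl
  calc _ = ∑ d, ∑ b, v d * (g⁻¹ b d * g b e) := by
        rw [Finset.sum_comm]
        exact Finset.sum_congr rfl fun d _ => Finset.sum_congr rfl fun b _ => by ring
    _ = v e := by
        simp only [← Finset.mul_sum, h]
        simp [Matrix.one_apply]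

/-- A covector whose cyclic product with an Einstein curvature tensor vanishes is zero. -/
theorem eq_zero_of_cyclic_mul_eq_zero {g : Matrix (Fin 4) (Fin 4) ℝ} (hs : gᵀ = g)
    (hu : IsUnit g.det) {N : Fin 4 → Fin 4 → Fin 4 → Fin 4 → ℝ}
    (hskew : ∀ a b c d, N b a c d = -N a b c d) (hanti : ∀ a b c d, N a b d c = -N a b c d)
    (hN : ∀ b d, ∑ a, ∑ c, g⁻¹ a c * N a b c d = g b d) {v : Fin 4 → ℝ}
    (h : ∀ a b c d e, v e * N a b c d + v c * N a b d e + v d * N a b e c = 0) (e : Fin 4) :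
    v e = 0 := by
  have h₁ : ∑ b, ∑ d, g⁻¹ b d * ∑ a, ∑ c, g⁻¹ a c * (v e * N a b c d) = 4 * v e := by
    have hb : ∀ b d, ∑ a, ∑ c, g⁻¹ a c * (v e * N a b c d)
        = (g * (1 : Matrix (Fin 4) (Fin 4) ℝ)) b d * v e := by
      intro b d
      rw [Matrix.mul_one, ← hN b d]
      simp only [Finset.sum_mul]
      exact Finset.sum_congr rfl fun a _ => Finset.sum_congr rfl fun c _ => by ring
    simp only [hb]
    rw [sum_inv_mul_trace hs hu]
    simp
  have h₂ : ∑ b, ∑ d, g⁻¹ b d * ∑ a, ∑ c, g⁻¹ a c * (v c * N a b d e) = -v e := by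
    have hc : ∀ a, ∑ b, ∑ d, g⁻¹ b d * N a b d e = -g a e := by
      intro a
      rw [← hN a e]
      simp only [← Finset.sum_neg_distrib]
      exact Finset.sum_congr rfl fun b _ => Finset.sum_congr rfl fun d _ => by
        rw [hskew b a]
        ring
    calc _ = ∑ b, ∑ d, ∑ a, ∑ c, g⁻¹ a c * v c * (g⁻¹ b d * N a b d e) := by
          simp only [Finset.mul_sum]
          refine Finset.sum_congr rfl fun b _ => Finset.sum_congr rfl fun d _ =>
            Finset.sum_congr rfl fun a _ => Finset.sum_congr rfl fun c _ => by ring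
      _ = ∑ b, ∑ a, ∑ d, ∑ c, g⁻¹ a c * v c * (g⁻¹ b d * N a b d e) :=
          Finset.sum_congr rfl fun b _ => Finset.sum_comm
      _ = ∑ a, ∑ b, ∑ d, ∑ c, g⁻¹ a c * v c * (g⁻¹ b d * N a b d e) := Finset.sum_comm
      _ = ∑ a, ∑ b, ∑ c, ∑ d, g⁻¹ a c * v c * (g⁻¹ b d * N a b d e) :=
          Finset.sum_congr rfl fun a _ => Finset.sum_congr rfl fun b _ => Finset.sum_comm
      _ = ∑ a, ∑ c, ∑ b, ∑ d, g⁻¹ a c * v c * (g⁻¹ b d * N a b d e) :=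
          Finset.sum_congr rfl fun a _ => Finset.sum_comm
      _ = -∑ a, ∑ c, g⁻¹ a c * (v c * g a e) := by
          simp only [← Finset.mul_sum, hc, ← Finset.sum_neg_distrib]
          exact Finset.sum_congr rfl fun a _ => Finset.sum_congr rfl fun c _ => by ring
      _ = -v e := by rw [sum_inv_mul_vec hs hu]
  have h₃ : ∑ b, ∑ d, g⁻¹ b d * ∑ a, ∑ c, g⁻¹ a c * (v d * N a b e c) = -v e := by
    have hb : ∀ b d, ∑ a, ∑ c, g⁻¹ a c * (v d * N a b e c) = -(v d * g b e) := by
      intro b d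
      rw [← hN b e, Finset.mul_sum, ← Finset.sum_neg_distrib]
      refine Finset.sum_congr rfl fun a _ => ?_
      rw [Finset.mul_sum, ← Finset.sum_neg_distrib]
      exact Finset.sum_congr rfl fun c _ => by
        rw [hanti a b c e]
        ring
    simp only [hb, mul_neg, Finset.sum_neg_distrib]
    rw [sum_inv_mul_vec hs hu]
  have hsum : ∑ b, ∑ d, g⁻¹ b d * ∑ a, ∑ c, g⁻¹ a c *
      (v e * N a b c d + v c * N a b d e + v d * N a b e c) = 0 := by
    simp only [h, mul_zero, Finset.sum_const_zero]
  simp only [mul_add, Finset.sum_add_distrib] at hsum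
  linarith

variable {g : (Fin 4 → ℝ) → Matrix (Fin 4) (Fin 4) ℝ}

/-- The second Bianchi identity for the covariant curvature. -/
theorem mul_curvMatrix_second_bianchi (hg : SmoothEntries g) (hs : ∀ x, (g x)ᵀ = g x)
    (hu : ∀ x, IsUnit (g x).det) (e c d : Fin 4) (x : Fin 4 → ℝ) :
    (matPd e (fun y => g y * curvMatrix g c d y) x
        - (connMatrix g e x)ᵀ * (g x * curvMatrix g c d x)
        - g x * curvMatrix g c d x * connMatrix g e x)
      + (matPd c (fun y => g y * curvMatrix g d e y) x
        - (connMatrix g c x)ᵀ * (g x * curvMatrix g d e x)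
        - g x * curvMatrix g d e x * connMatrix g c x)
      + (matPd d (fun y => g y * curvMatrix g e c y) x
        - (connMatrix g d x)ᵀ * (g x * curvMatrix g e c x)
        - g x * curvMatrix g e c x * connMatrix g d x) = 0 := by
  have key : ∀ e c d, matPd e (fun y => g y * curvMatrix g c d y) x
        - (connMatrix g e x)ᵀ * (g x * curvMatrix g c d x)
        - g x * curvMatrix g c d x * connMatrix g e x
      = g x * (matPd e (curvMatrix g c d) x + connMatrix g e x * curvMatrix g c d x
        - curvMatrix g c d x * connMatrix g e x) := by
    intro e c d
    rw [matPd_mul hg (curvMatrix_smooth hg hu c d), matPd_metric hs hu]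
    noncomm_ring
  rw [key, key, key, ← Matrix.mul_add, ← Matrix.mul_add, curvMatrix_second_bianchi hg hu,
    Matrix.mul_zero]

/-- The algebraic curvature tensor of a parallel bilinear form is parallel. -/
theorem pd_unitCurvature {p : (Fin 4 → ℝ) → Matrix (Fin 4) (Fin 4) ℝ} (hp : SmoothEntries p)
    (hpar : ∀ i x, matPd i p x = (connMatrix g i x)ᵀ * p x + p x * connMatrix g i x)
    (e a b c d : Fin 4) (x : Fin 4 → ℝ) :
    pd e (fun y => unitCurvature (p y) a b c d) x
      = ∑ m, (christoffel g m e a x * unitCurvature (p x) m b c d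
        + christoffel g m e b x * unitCurvature (p x) a m c d
        + christoffel g m e c x * unitCurvature (p x) a b m d
        + christoffel g m e d x * unitCurvature (p x) a b c m) := by
  have hpd : ∀ a c, pd e (fun y => p y a c) x
      = ∑ m, christoffel g m e a x * p x m c + ∑ m, christoffel g m e c x * p x a m := by
    intro a c
    have h := congrFun (congrFun (hpar e x) a) c
    simp only [Matrix.add_apply, Matrix.mul_apply, Matrix.transpose_apply] at h
    rw [show pd e (fun y => p y a c) x = matPd e p x a c from rfl, h]
    congr 1
    exact Finset.sum_congr rfl fun m _ => mul_comm _ _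
  have hprod : ∀ a b c d, pd e (fun y => p y a c * p y b d) x
      = ∑ m, (christoffel g m e a x * (p x m c * p x b d)
        + christoffel g m e b x * (p x a c * p x m d)
        + christoffel g m e c x * (p x a m * p x b d)
        + christoffel g m e d x * (p x a c * p x b m)) := by
    intro a b c d
    rw [pd_mul (hp a c) (hp b d), hpd, hpd]
    simp only [Finset.sum_mul, Finset.mul_sum, add_mul, mul_add, ← Finset.sum_add_distrib]
    exact Finset.sum_congr rfl fun m _ => by ring
  have hsub : pd e (fun y => unitCurvature (p y) a b c d) x
      = pd e (fun y => p y a c * p y b d) x - pd e (fun y => p y a d * p y b c) x := by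
    rw [sub_eq_add_neg, ← pd_neg, ← pd_add ((hp a c).mul (hp b d)) ((hp a d).mul (hp b c)).neg]
    rfl
  rw [hsub, hprod, hprod, ← Finset.sum_sub_distrib]
  refine Finset.sum_congr rfl fun m _ => ?_
  simp only [unitCurvature]
  ring

/-- Schur's lemma for curvature tensors that are a function times a parallel tensor of constant
Ricci curvature. -/
theorem pd_eq_zero_of_riemannLow_eq (hg : SmoothEntries g) (hs : ∀ x, (g x)ᵀ = g x)
    (hu : ∀ x, IsUnit (g x).det) {f : (Fin 4 → ℝ) → ℝ} (hf : ContDiff ℝ ∞ f)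
    {N : (Fin 4 → ℝ) → Fin 4 → Fin 4 → Fin 4 → Fin 4 → ℝ}
    (hNsm : ∀ a b c d, ContDiff ℝ ∞ fun x => N x a b c d)
    (hskew : ∀ x a b c d, N x b a c d = -N x a b c d)
    (hanti : ∀ x a b c d, N x a b d c = -N x a b c d)
    (hN : ∀ x b d, ∑ a, ∑ c, (g x)⁻¹ a c * N x a b c d = g x b d)
    (hpar : ∀ e a b c d x, pd e (fun y => N y a b c d) x
      = ∑ m, (christoffel g m e a x * N x m b c d + christoffel g m e b x * N x a m c d
        + christoffel g m e c x * N x a b m d + christoffel g m e d x * N x a b c m))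
    (hR : ∀ x a b c d, riemannLow g a b c d x = f x * N x a b c d) (e : Fin 4)
    (x : Fin 4 → ℝ) : pd e f x = 0 := by
  refine eq_zero_of_cyclic_mul_eq_zero (hs x) (hu x) (hskew x) (hanti x) (hN x)
    (v := fun i => pd i f x) (fun a b c d e => ?_) e
  have hterm : ∀ e c d, (matPd e (fun y => g y * curvMatrix g c d y) x
        - (connMatrix g e x)ᵀ * (g x * curvMatrix g c d x)
        - g x * curvMatrix g c d x * connMatrix g e x) a b
      = pd e f x * N x a b c d + ∑ m, f x * christoffel g m e c x * N x a b m d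
        + ∑ m, f x * christoffel g m e d x * N x a b c m := by
    intro e c d
    have hL : ∀ y a b, (g y * curvMatrix g c d y) a b = f y * N y a b c d := fun y a b => by
      rw [← riemannLow_eq, hR]
    rw [Matrix.sub_apply, Matrix.sub_apply, Matrix.mul_apply (M := (connMatrix g e x)ᵀ),
      Matrix.mul_apply (N := connMatrix g e x)]
    simp only [matPd, Matrix.of_apply, hL]
    rw [pd_mul hf (hNsm a b c d), hpar, Finset.mul_sum, add_sub_assoc, add_sub_assoc, add_assoc,
      ← Finset.sum_add_distrib, ← Finset.sum_sub_distrib, ← Finset.sum_sub_distrib]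
    congr 1
    refine Finset.sum_congr rfl fun m _ => ?_
    simp only [connMatrix, Matrix.of_apply, Matrix.transpose_apply]
    ring
  have h := congrFun (congrFun (mul_curvMatrix_second_bianchi hg hs hu e c d x) a) b
  rw [Matrix.add_apply, Matrix.add_apply, hterm, hterm, hterm, Matrix.zero_apply] at h
  have hcancel : ∀ i k l, ∑ m, f x * christoffel g m i k x * N x a b m l
      + ∑ m, f x * christoffel g m k i x * N x a b l m = 0 := by
    intro i k l
    rw [← Finset.sum_add_distrib]
    refine Finset.sum_eq_zero fun m _ => ?_
    rw [christoffel_symm hs m k i, hanti x a b m l]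
    ring
  linear_combination h - hcancel e c d - hcancel c d e - hcancel d e c

end Schur

section NeutralMetric

variable {g j : (Fin 4 → ℝ) → Matrix (Fin 4) (Fin 4) ℝ}

theorem matPd_eq_of_covDerivEnd_eq_zero (hpar : ∀ x i k l, covDerivEnd g j i k l x = 0)
    (i : Fin 4) (x : Fin 4 → ℝ) :
    matPd i j x = j x * connMatrix g i x - connMatrix g i x * j x := by
  ext k l
  have h := hpar x i k l
  simp only [covDerivEnd] at h
  simp only [matPd, connMatrix, Matrix.of_apply, Matrix.sub_apply, Matrix.mul_apply]
  simp only [mul_comm (j x k _)]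
  linear_combination h

theorem matPd_mul_of_parallel (hg : SmoothEntries g) (hj : SmoothEntries j)
    (hs : ∀ x, (g x)ᵀ = g x) (hu : ∀ x, IsUnit (g x).det)
    (hpar : ∀ i x, matPd i j x = j x * connMatrix g i x - connMatrix g i x * j x)
    (i : Fin 4) (x : Fin 4 → ℝ) :
    matPd i (fun y => g y * j y) x
      = (connMatrix g i x)ᵀ * (g x * j x) + g x * j x * connMatrix g i x := by
  rw [matPd_mul hg hj, matPd_metric hs hu, hpar]
  noncomm_ring

theorem christoffel_neutral_eq (hg : SmoothEntries g) (hj : SmoothEntries j)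
    (hs : ∀ x, (g x)ᵀ = g x) (hu : ∀ x, IsUnit (g x).det) (hj2 : ∀ x, j x * j x = 1)
    (hgj : ∀ x, (j x)ᵀ * g x = g x * j x)
    (hpar : ∀ i x, matPd i j x = j x * connMatrix g i x - connMatrix g i x * j x) :
    christoffel (fun x => g x * j x) = christoffel g := by
  refine christoffel_eq_of_parallel hs (fun x => ?_) (fun x => ?_)
    (matPd_mul_of_parallel hg hj hs hu hpar)
  · rw [Matrix.transpose_mul, hs, hgj]
  · rw [Matrix.det_mul]
    refine (hu x).mul (IsUnit.of_mul_eq_one (j x).det ?_)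
    rw [← Matrix.det_mul, hj2, Matrix.det_one]

theorem ricciT_smooth (hg : SmoothEntries g) (hu : ∀ x, IsUnit (g x).det) (b d : Fin 4) :
    ContDiff ℝ ∞ (ricciT g b d) := by
  unfold ricciT
  exact ContDiff.sum fun a _ => curvMatrix_smooth hg hu a d a b

/-- If the two sectional curvatures agree at every point then the metric is Einstein. -/
theorem exists_ricciT_eq_of_riemannLow_eq (hg : SmoothEntries g) (hj : SmoothEntries j)
    (hs : ∀ x, (g x)ᵀ = g x) (hpos : ∀ x, (g x).PosDef) (hj2 : ∀ x, j x * j x = 1)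
    (htr : ∀ x, (j x).trace = 0)
    (hpar : ∀ i x, matPd i j x = j x * connMatrix g i x - connMatrix g i x * j x)
    (hK : ∀ x, ∃ K : ℝ, ∀ a b c d, riemannLow g a b c d x
      = K * unitCurvature (g x * plusProj (j x)) a b c d
        + K * unitCurvature (g x * minusProj (j x)) a b c d) :
    ∃ lam : ℝ, ∀ x k l, ricciT g k l x = lam * g x k l := by
  have hu : ∀ x, IsUnit (g x).det := fun x => (hpos x).det_pos.ne'.isUnit
  choose f hf using hK
  have hric : ∀ x k l, ricciT g k l x = f x * g x k l := by
    intro x k l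
    rw [ricciT_eq_of_riemannLow_eq (hu x) (hj2 x) (htr x) (hf x), ← mul_add, ← Matrix.add_apply,
      ← Matrix.mul_add, plusProj_add_minusProj, Matrix.mul_one]
  have h00 : ∀ x, g x 0 0 ≠ 0 := fun x => ((hpos x).diag_pos (i := 0)).ne'
  have hfsm : ContDiff ℝ ∞ f := by
    have h : f = fun x => ricciT g 0 0 x / g x 0 0 := by
      funext x
      rw [hric, mul_div_cancel_right₀ _ (h00 x)]
    rw [h]
    exact (ricciT_smooth hg hu 0 0).div (hg 0 0) h00
  have hgj := hg.mul hj
  have hgjpar := matPd_mul_of_parallel hg hj hs hu hpar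
  have hplus : (fun x => g x * plusProj (j x)) = fun x => (1 / 2 : ℝ) • (g x + g x * j x) := by
    funext x
    rw [plusProj, Matrix.mul_smul, Matrix.mul_add, Matrix.mul_one]
  have hminus : (fun x => g x * minusProj (j x)) = fun x => (1 / 2 : ℝ) • (g x - g x * j x) := by
    funext x
    rw [minusProj, Matrix.mul_smul, Matrix.mul_sub, Matrix.mul_one]
  have hsm : ∀ {A : (Fin 4 → ℝ) → Matrix (Fin 4) (Fin 4) ℝ}, SmoothEntries A →
      SmoothEntries fun x => (1 / 2 : ℝ) • A x := fun hA a b => contDiff_const.mul (hA a b)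
  have hmatPd : ∀ {A : (Fin 4 → ℝ) → Matrix (Fin 4) (Fin 4) ℝ}, SmoothEntries A → ∀ i x,
      matPd i (fun x => (1 / 2 : ℝ) • A x) x = (1 / 2 : ℝ) • matPd i A x := by
    intro A hA i x
    ext a b
    simp only [matPd, Matrix.smul_apply, smul_eq_mul, Matrix.of_apply]
    rw [pd_mul contDiff_const (hA a b)]
    simp [pd]
  have hpsm : SmoothEntries fun x => g x * plusProj (j x) := by
    rw [hplus]
    exact hsm (hg.add hgj)
  have hmsm : SmoothEntries fun x => g x * minusProj (j x) := by
    rw [hminus]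
    exact hsm (hg.sub hgj)
  have hppar : ∀ i x, matPd i (fun x => g x * plusProj (j x)) x
      = (connMatrix g i x)ᵀ * (g x * plusProj (j x))
        + g x * plusProj (j x) * connMatrix g i x := by
    intro i x
    rw [congrFun hplus x, hplus, hmatPd (hg.add hgj), matPd_add hg hgj, hgjpar, matPd_metric hs hu,
      Matrix.mul_smul, Matrix.smul_mul, ← smul_add]
    congr 1
    noncomm_ring
  have hmpar : ∀ i x, matPd i (fun x => g x * minusProj (j x)) x
      = (connMatrix g i x)ᵀ * (g x * minusProj (j x))
        + g x * minusProj (j x) * connMatrix g i x := by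
    intro i x
    rw [congrFun hminus x, hminus, hmatPd (hg.sub hgj), matPd_sub hg hgj, hgjpar,
      matPd_metric hs hu, Matrix.mul_smul, Matrix.smul_mul, ← smul_add]
    congr 1
    noncomm_ring
  have hUsm : ∀ {p : (Fin 4 → ℝ) → Matrix (Fin 4) (Fin 4) ℝ}, SmoothEntries p → ∀ a b c d,
      ContDiff ℝ ∞ fun x => unitCurvature (p x) a b c d := fun hp a b c d =>
    ((hp a c).mul (hp b d)).sub ((hp a d).mul (hp b c))
  have hconst := pd_eq_zero_of_riemannLow_eq hg hs hu hfsm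
    (N := fun x a b c d => unitCurvature (g x * plusProj (j x)) a b c d
      + unitCurvature (g x * minusProj (j x)) a b c d)
    (fun a b c d => (hUsm hpsm a b c d).add (hUsm hmsm a b c d))
    (fun x a b c d => by simp only [unitCurvature]; ring)
    (fun x a b c d => by simp only [unitCurvature]; ring)
    (fun x b d => by
      simp only [mul_add, Finset.sum_add_distrib]
      rw [sum_inv_mul_unitCurvature (hs x) (hu x) (plusProj_mul_self (hj2 x))
          (trace_plusProj (htr x)),
        sum_inv_mul_unitCurvature (hs x) (hu x) (minusProj_mul_self (hj2 x))
          (trace_minusProj (htr x)),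
        ← Matrix.add_apply, ← Matrix.mul_add, plusProj_add_minusProj, Matrix.mul_one])
    (fun e a b c d x => by
      rw [pd_add (hUsm hpsm a b c d) (hUsm hmsm a b c d), pd_unitCurvature hpsm hppar,
        pd_unitCurvature hmsm hmpar, ← Finset.sum_add_distrib]
      exact Finset.sum_congr rfl fun m _ => by ring)
    (fun x a b c d => by rw [hf, mul_add])
  exact ⟨f 0, fun x k l => by rw [hric, eq_const_of_pd_eq_zero hfsm hconst x 0]⟩

theorem sectional_eq_of_ricciT_eq {x : Fin 4 → ℝ} (hu : IsUnit (g x).det)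
    (hj2 : j x * j x = 1) (htr : (j x).trace = 0) {K₁ K₂ lam : ℝ}
    (hK : ∀ a b c d, riemannLow g a b c d x
      = K₁ * unitCurvature (g x * plusProj (j x)) a b c d
        + K₂ * unitCurvature (g x * minusProj (j x)) a b c d)
    (hE : ∀ k l, ricciT g k l x = lam * g x k l) : K₁ = K₂ := by
  have h : g x * (K₁ • plusProj (j x) + K₂ • minusProj (j x)) = g x * (lam • 1) := by
    ext k l
    have h' := hE k l
    rw [ricciT_eq_of_riemannLow_eq hu hj2 htr hK] at h'
    simpa [Matrix.mul_add] using h'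
  have h1 : K₁ • plusProj (j x) + K₂ • minusProj (j x) = lam • 1 := by
    have := congrArg ((g x)⁻¹ * ·) h
    simpa only [← Matrix.mul_assoc, Matrix.nonsing_inv_mul _ hu, Matrix.one_mul] using this
  have h2 := congrArg (fun A => (A * (plusProj (j x) - minusProj (j x))).trace) h1
  simp only [add_mul, mul_sub, Matrix.smul_mul, plusProj_mul_self hj2, minusProj_mul_self hj2,
    plusProj_mul_minusProj hj2, minusProj_mul_plusProj hj2, Matrix.trace_add, Matrix.trace_sub,
    Matrix.trace_smul, trace_plusProj htr, trace_minusProj htr, Matrix.trace_zero, smul_eq_mul,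
    Matrix.one_mul] at h2
  linarith

end NeutralMetric

/-- **(Guilfoyle–Georgiou.)** Let `g` be a Riemannian metric on (a coordinate patch of) a
4-manifold endowed with a parallel isometric paracomplex structure `j`, and let
`g'(X,Y) = g(jX,Y)` be the associated neutral metric.  Then `g'` is locally conformally
flat (vanishing Weyl tensor) if and only if `g` is Einstein. -/
theorem conformally_flat_iff_einstein
    (g j : (Fin 4 → ℝ) → Matrix (Fin 4) (Fin 4) ℝ)
    (hgsm : ∀ k l, ContDiff ℝ (⊤ : ℕ∞) (fun x => g x k l))
    (hjsm : ∀ k l, ContDiff ℝ (⊤ : ℕ∞) (fun x => j x k l))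
    (hgsymm : ∀ x, (g x)ᵀ = g x) (hgpos : ∀ x, (g x).PosDef)
    (hj2 : ∀ x, j x * j x = 1)
    (hrank : ∀ x, Module.finrank ℝ
        (Module.End.eigenspace (Matrix.toLin' (j x)) 1) = 2)
    (hiso : ∀ x, (j x)ᵀ * g x * j x = g x)
    (hpar : ∀ x i k l, covDerivEnd g j i k l x = 0)
    (g' : (Fin 4 → ℝ) → Matrix (Fin 4) (Fin 4) ℝ)
    (hg' : ∀ x, g' x = (j x)ᵀ * g x) :
    (∀ x a b c d, weylT g' a b c d x = 0) ↔
      ∃ lam : ℝ, ∀ x k l, ricciT g k l x = lam * g x k l := by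
  have hg : SmoothEntries g := hgsm
  have hj : SmoothEntries j := hjsm
  have htr : ∀ x, (j x).trace = 0 := fun x => trace_eq_zero_of_finrank_eigenspace (hj2 x) (hrank x)
  have hu : ∀ x, IsUnit (g x).det := fun x => (hgpos x).det_pos.ne'.isUnit
  have hgj : ∀ x, (j x)ᵀ * g x = g x * j x := fun x => transpose_mul_eq_mul (hj2 x) (hiso x)
  have hjpar := matPd_eq_of_covDerivEnd_eq_zero hpar
  have hg'j : ∀ x, g' x = g x * j x := fun x => (hg' x).trans (hgj x)
  have hR : riemannUp g' = riemannUp g := by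
    rw [show g' = fun x => g x * j x from funext hg'j]
    exact riemannUp_congr (christoffel_neutral_eq hg hj hgsymm hu hj2 hgj hjpar)
  have hK := exists_riemannLow_eq hg hj hgsymm hgpos hj2 hiso htr hjpar
  constructor
  · intro hW
    refine exists_ricciT_eq_of_riemannLow_eq hg hj hgsymm hgpos hj2 htr hjpar fun x => ?_
    obtain ⟨K₁, K₂, h⟩ := hK x
    obtain rfl := sectional_eq_of_weylT_neutral_eq_zero (hgpos x) (hgsymm x) (hj2 x) (htr x)
      (hgj x) (hg'j x) hR h (hW x)
    exact ⟨K₁, h⟩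
  · rintro ⟨lam, hE⟩ x a b c d
    obtain ⟨K₁, K₂, h⟩ := hK x
    obtain rfl := sectional_eq_of_ricciT_eq (hu x) (hj2 x) (htr x) h (hE x)
    rw [weylT_neutral_eq (hu x) (hgsymm x) (hj2 x) (htr x) (hgj x) (hg'j x) hR h, sub_self,
      zero_mul]
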